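/- There exist universal constants c > 0 and C ≥ 1 such that the following holds. Let (g_υ)_{υ∈ℝ^I} be a nice distribution of polynomials of degree at most d on ℝ^n. Fix parameters 0 < β' < 1, R' ≥ 1, m ∈ ℕ with m ≥ 1, 0 < ε ≤ 1, and assume 0 ≤ λ ≤ c⁴·ε·β'^5/(R'²·m³·d). Then for x ∼ N(0,1)^n, except with probability at most β', we have (1/ε)·E_υ[HyperVar_{R'}[((g_υ)_{λ|x})^{≥m}]] ≤ (C·c·β'/m)^{4m}·E_υ[‖g_υ‖₂²]. -/

import Mathlib

open MeasureTheory ProbabilityTheory MvPolynomial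

/-- The standard Gaussian measure `N(0,1)^n` on `ℝ^n`. -/
noncomputable def gaussianN (n : ℕ) : Measure (Fin n → ℝ) :=
  Measure.pi fun _ => gaussianReal 0 1

/-- The normalized probabilists' Hermite polynomial `h_k = H_k / √(k!)`. -/
noncomputable def hermiteFn (k : ℕ) (t : ℝ) : ℝ :=
  ((Polynomial.hermite k).map (Int.castRingHom ℝ)).eval t / Real.sqrt (Nat.factorial k)

/-- The multivariate Hermite polynomial `h_α(x) = ∏ i, h_{α i}(x i)`. -/
noncomputable def hermiteMv {n : ℕ} (α : Fin n → ℕ) (x : Fin n → ℝ) : ℝ :=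
  ∏ i, hermiteFn (α i) (x i)

/-- Hermite coefficient `f̂(α) = E_{x ∼ N(0,1)^n}[f(x)·h_α(x)]` of a function. -/
noncomputable def hermiteCoeffF {n : ℕ} (f : (Fin n → ℝ) → ℝ) (α : Fin n → ℕ) : ℝ :=
  ∫ x, f x * hermiteMv α x ∂(gaussianN n)

/-- Hermite coefficient `ĝ(α)` of a polynomial. -/
noncomputable def hermiteCoeff {n : ℕ} (g : MvPolynomial (Fin n) ℝ) (α : Fin n → ℕ) : ℝ :=
  hermiteCoeffF (fun x => eval x g) α

/-- The squared Gaussian 2-norm `‖g‖₂² = E_{x ∼ N(0,1)^n}[g(x)²]`. -/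
noncomputable def norm2sq {n : ℕ} (g : MvPolynomial (Fin n) ℝ) : ℝ :=
  ∫ x, (eval x g) ^ 2 ∂(gaussianN n)

/-- The `λ`-zoom of `g` at `x`: `g_{λ|x}(y) = g(√(1-λ)·x + √λ·y)`, as a polynomial in `y`. -/
noncomputable def zoom {n : ℕ} (g : MvPolynomial (Fin n) ℝ) (lam : ℝ) (x : Fin n → ℝ) :
    MvPolynomial (Fin n) ℝ :=
  aeval (fun i => C (Real.sqrt (1 - lam) * x i) + C (Real.sqrt lam) * X i) g

/-- `HyperVar_R[g^{≥m}] = Σ_{|α| ≥ m} R^{2|α|}·ĝ(α)²`. -/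
noncomputable def hyperVarGE {n : ℕ} (R : ℝ) (m : ℕ) (g : MvPolynomial (Fin n) ℝ) : ℝ :=
  ∑' α : Fin n → ℕ, if m ≤ ∑ i, α i then R ^ (2 * ∑ i, α i) * hermiteCoeff g α ^ 2 else 0

/-- `HyperVar_R[g] = Σ_{α ≠ 0} R^{2|α|}·ĝ(α)²`. -/
noncomputable def hyperVar {n : ℕ} (R : ℝ) (g : MvPolynomial (Fin n) ℝ) : ℝ :=
  hyperVarGE R 1 g

/-- A nice distribution of polynomials of degree at most `d` on `ℝ^n`, indexed by
`υ ∈ ℝ^I`: each `g υ` has degree at most `d` and each coefficient of `g υ` is a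
polynomial of degree at most `d` in `υ`. -/
def NiceFamily (n I d : ℕ) (g : (Fin I → ℝ) → MvPolynomial (Fin n) ℝ) : Prop :=
  (∀ υ, (g υ).totalDegree ≤ d) ∧
  ∀ m : Fin n →₀ ℕ, ∃ P : MvPolynomial (Fin I) ℝ,
    P.totalDegree ≤ d ∧ ∀ υ, coeff m (g υ) = eval υ P

theorem derivative_hermite_succ (k : ℕ) :
    Polynomial.derivative (Polynomial.hermite (k + 1)) =
      (k + 1 : Polynomial ℤ) * Polynomial.hermite k := by
  induction k with
  | zero => simp
  | succ k ih =>
    rw [Polynomial.hermite_succ (k + 1), Polynomial.derivative_sub, Polynomial.derivative_mul, ih,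
      Polynomial.derivative_mul, Polynomial.hermite_succ k]
    simp
    ring

/-- The probabilists' Hermite polynomial with real coefficients. -/
noncomputable def hermiteReal (k : ℕ) : Polynomial ℝ :=
  (Polynomial.hermite k).map (Int.castRingHom ℝ)

theorem hermiteReal_zero : hermiteReal 0 = 1 := by simp [hermiteReal]

theorem hermiteReal_succ (k : ℕ) : hermiteReal (k + 1) =
    Polynomial.X * hermiteReal k - Polynomial.derivative (hermiteReal k) := by
  simp [hermiteReal, Polynomial.hermite_succ]

theorem derivative_hermiteReal_succ (k : ℕ) :
    Polynomial.derivative (hermiteReal (k + 1)) =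
      Polynomial.C (k + 1 : ℝ) * hermiteReal k := by
  rw [hermiteReal, Polynomial.derivative_map, derivative_hermite_succ]
  simp [hermiteReal]

theorem hermiteFn_eq (k : ℕ) (t : ℝ) :
    hermiteFn k t = (hermiteReal k).eval t / Real.sqrt (Nat.factorial k) := rfl

theorem integrable_polynomial_gaussianReal (p : Polynomial ℝ) :
    Integrable (fun t => p.eval t) (gaussianReal 0 1) := by
  simp_rw [Polynomial.eval_eq_sum_range]
  refine integrable_finsetSum _ fun i _ => Integrable.const_mul ?_ _
  have h := (memLp_id_gaussianReal (μ := 0) (v := 1) (i : NNReal)).integrable_norm_pow'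
  refine (integrable_norm_iff (by fun_prop)).1 ?_
  simpa using h

/-- Gaussian integration by parts for polynomials. -/
theorem integral_X_mul_sub_derivative (p : Polynomial ℝ) :
    ∫ t, (Polynomial.X * p - Polynomial.derivative p).eval t ∂(gaussianReal 0 1) = 0 := by
  have hint : ∀ q : Polynomial ℝ,
      Integrable (fun t => gaussianPDFReal 0 1 t * q.eval t) volume := by
    intro q
    have h := integrable_polynomial_gaussianReal q
    rw [gaussianReal_of_var_ne_zero _ one_ne_zero,
      integrable_withDensity_iff_integrable_smul' (measurable_gaussianPDF _ _)
        (by simp [gaussianPDF])] at h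
    simpa [gaussianPDF, gaussianPDFReal_nonneg] using h
  rw [integral_gaussianReal_eq_integral_smul one_ne_zero, ← neg_eq_zero, ← integral_neg]
  refine integral_eq_zero_of_hasDerivAt_of_integrable
    (f := fun t => gaussianPDFReal 0 1 t * p.eval t) ?_ ?_ (hint p)
  · intro t
    have h1 : HasDerivAt (fun t => gaussianPDFReal 0 1 t) (gaussianPDFReal 0 1 t * (-t)) t := by
      unfold gaussianPDFReal
      have : HasDerivAt (fun t : ℝ => -(t - 0) ^ 2 / (2 * ((1 : NNReal) : ℝ))) (-t) t := by
        have := (((hasDerivAt_id t).sub_const 0).pow 2).neg.div_const (2 * ((1 : NNReal) : ℝ))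
        refine this.congr_deriv ?_
        simp
        ring
      refine (this.exp.const_mul _).congr_deriv ?_
      ring
    refine (h1.mul (p.hasDerivAt t)).congr_deriv ?_
    simp
    ring
  · exact (hint _).neg

theorem integral_hermiteReal_succ_mul (k : ℕ) (q : Polynomial ℝ) :
    ∫ t, (hermiteReal (k + 1) * q).eval t ∂(gaussianReal 0 1) =
      ∫ t, (hermiteReal k * Polynomial.derivative q).eval t ∂(gaussianReal 0 1) := by
  have h := integral_X_mul_sub_derivative (hermiteReal k * q)
  rw [← sub_eq_zero, ← integral_sub (integrable_polynomial_gaussianReal _)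
    (integrable_polynomial_gaussianReal _)]
  refine Eq.trans (integral_congr_ae (Filter.Eventually.of_forall fun t => ?_)) h
  simp [hermiteReal_succ, Polynomial.derivative_mul]
  ring

theorem integral_hermiteReal_mul (j k : ℕ) :
    ∫ t, (hermiteReal j * hermiteReal k).eval t ∂(gaussianReal 0 1) =
      if j = k then (Nat.factorial k : ℝ) else 0 := by
  induction j generalizing k with
  | zero =>
    cases k with
    | zero => simp [hermiteReal_zero]
    | succ k =>
      rw [mul_comm, integral_hermiteReal_succ_mul]
      simp [hermiteReal_zero]
  | succ j ih =>
    rw [integral_hermiteReal_succ_mul]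
    cases k with
    | zero => simp [hermiteReal_zero]
    | succ k =>
      rw [derivative_hermiteReal_succ]
      have : ∀ t : ℝ, (hermiteReal j * (Polynomial.C (k + 1 : ℝ) * hermiteReal k)).eval t =
          (k + 1 : ℝ) * (hermiteReal j * hermiteReal k).eval t := by
        intro t; simp; ring
      simp_rw [this, integral_const_mul, ih]
      by_cases h : j = k <;> simp [h, Nat.factorial_succ]

theorem integral_hermiteFn_mul (j k : ℕ) :
    ∫ t, hermiteFn j t * hermiteFn k t ∂(gaussianReal 0 1) = if j = k then 1 else 0 := by
  have : ∀ t, hermiteFn j t * hermiteFn k t = (hermiteReal j * hermiteReal k).eval t *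
      (Real.sqrt (Nat.factorial j) * Real.sqrt (Nat.factorial k))⁻¹ := by
    intro t; simp [hermiteFn_eq]; ring
  simp_rw [this, integral_mul_const, integral_hermiteReal_mul]
  split_ifs with h
  · subst h
    rw [Real.mul_self_sqrt (by positivity), mul_inv_cancel₀ (by positivity)]
  · simp

theorem integrable_hermiteFn_mul (j k : ℕ) :
    Integrable (fun t => hermiteFn j t * hermiteFn k t) (gaussianReal 0 1) := by
  have : (fun t => hermiteFn j t * hermiteFn k t) =
      fun t => (hermiteReal j * hermiteReal k).eval t *
      (Real.sqrt (Nat.factorial j) * Real.sqrt (Nat.factorial k))⁻¹ := by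
    ext t; simp [hermiteFn_eq]; ring
  rw [this]
  exact (integrable_polynomial_gaussianReal _).mul_const _

theorem continuous_hermiteFn (k : ℕ) : Continuous (hermiteFn k) := by
  unfold hermiteFn
  fun_prop

theorem eval_hermiteReal_add {a b : ℝ} (hab : a ^ 2 + b ^ 2 = 1) (k : ℕ) (x y : ℝ) :
    (hermiteReal k).eval (a * x + b * y) =
      ∑ ij ∈ Finset.HasAntidiagonal.antidiagonal k, (k.choose ij.1 : ℝ) *
        (b ^ ij.1 * (hermiteReal ij.1).eval y * (a ^ ij.2 * (hermiteReal ij.2).eval x)) := by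
  induction k generalizing x y with
  | zero => simp [hermiteReal_zero]
  | succ k ih =>
    have hx : a * (Polynomial.derivative (hermiteReal k)).eval (a * x + b * y) =
        ∑ ij ∈ Finset.HasAntidiagonal.antidiagonal k, (k.choose ij.1 : ℝ) * (b ^ ij.1 * (hermiteReal ij.1).eval y *
          (a ^ ij.2 * (Polynomial.derivative (hermiteReal ij.2)).eval x)) := by
      have h1 : HasDerivAt (fun x => (hermiteReal k).eval (a * x + b * y))
          (a * (Polynomial.derivative (hermiteReal k)).eval (a * x + b * y)) x := by
        have := ((hermiteReal k).hasDerivAt (a * x + b * y)).comp x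
          (((hasDerivAt_id x).const_mul a).add_const (b * y))
        refine this.congr_deriv ?_
        ring
      refine h1.unique ?_
      simp_rw [ih]
      exact HasDerivAt.fun_sum fun ij _ =>
        ((((hermiteReal ij.2).hasDerivAt x).const_mul _).const_mul _).const_mul _
    have hy : b * (Polynomial.derivative (hermiteReal k)).eval (a * x + b * y) =
        ∑ ij ∈ Finset.HasAntidiagonal.antidiagonal k, (k.choose ij.1 : ℝ) *
          (b ^ ij.1 * (Polynomial.derivative (hermiteReal ij.1)).eval y *
          (a ^ ij.2 * (hermiteReal ij.2).eval x)) := by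
      have h1 : HasDerivAt (fun y => (hermiteReal k).eval (a * x + b * y))
          (b * (Polynomial.derivative (hermiteReal k)).eval (a * x + b * y)) y := by
        have := ((hermiteReal k).hasDerivAt (a * x + b * y)).comp y
          (((hasDerivAt_id y).const_mul b).const_add (a * x))
        refine this.congr_deriv ?_
        ring
      refine h1.unique ?_
      simp_rw [ih]
      exact HasDerivAt.fun_sum fun ij _ =>
        ((((hermiteReal ij.1).hasDerivAt y).const_mul _).mul_const _).const_mul _
    have hz : (hermiteReal (k + 1)).eval (a * x + b * y) =
        a * x * (hermiteReal k).eval (a * x + b * y)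
        - a * (a * (Polynomial.derivative (hermiteReal k)).eval (a * x + b * y))
        + (b * y * (hermiteReal k).eval (a * x + b * y)
        - b * (b * (Polynomial.derivative (hermiteReal k)).eval (a * x + b * y))) := by
      rw [hermiteReal_succ]
      simp only [Polynomial.eval_sub, Polynomial.eval_mul, Polynomial.eval_X]
      linear_combination
        (Polynomial.derivative (hermiteReal k)).eval (a * x + b * y) * hab
    rw [hz, hx, hy, ih, Finset.sum_antidiagonal_choose_succ_mul
      (fun j i => b ^ j * (hermiteReal j).eval y * (a ^ i * (hermiteReal i).eval x))]
    simp only [Finset.mul_sum, ← Finset.sum_sub_distrib]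
    congr 1
    · refine Finset.sum_congr rfl fun ij _ => ?_
      simp [hermiteReal_succ]
      ring
    · refine Finset.sum_congr rfl fun ij hij => ?_
      rw [Nat.choose_symm_of_eq_add (Finset.HasAntidiagonal.mem_antidiagonal.1 hij).symm]
      simp [hermiteReal_succ]
      ring

/-- The coefficient of `h_{k-j}(x) * h_j(y)` in the expansion of `h_k (a * x + b * y)`. -/
noncomputable def zoomCoeff (a b : ℝ) (k j : ℕ) : ℝ :=
  Real.sqrt (k.choose j) * a ^ (k - j) * b ^ j

theorem zoomCoeff_eq_zero {a b : ℝ} {k j : ℕ} (h : k < j) : zoomCoeff a b k j = 0 := by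
  simp [zoomCoeff, Nat.choose_eq_zero_of_lt h]

theorem sum_range_extend {k d : ℕ} (hkd : k ≤ d) {f : ℕ → ℝ} (hf : ∀ j, k < j → f j = 0) :
    ∑ j ∈ Finset.range (d + 1), f j = ∑ j ∈ Finset.range (k + 1), f j := by
  refine (Finset.sum_subset (by simpa using hkd) fun j _ hj => hf j ?_).symm
  simpa [Nat.lt_succ_iff] using hj

theorem hermiteFn_add {a b : ℝ} (hab : a ^ 2 + b ^ 2 = 1) {k d : ℕ} (hkd : k ≤ d) (x y : ℝ) :
    hermiteFn k (a * x + b * y) = ∑ j ∈ Finset.range (d + 1),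
      zoomCoeff a b k j * hermiteFn (k - j) x * hermiteFn j y := by
  rw [sum_range_extend hkd fun j hj => by simp [zoomCoeff_eq_zero hj], hermiteFn_eq,
    eval_hermiteReal_add hab, Finset.Nat.sum_antidiagonal_eq_sum_range_succ_mk, Finset.sum_div]
  refine Finset.sum_congr rfl fun j hj => ?_
  have hjk : j ≤ k := Nat.lt_succ_iff.1 (Finset.mem_range.1 hj)
  have h := Nat.choose_mul_factorial_mul_factorial hjk
  have h1 : Real.sqrt (k.choose j) * Real.sqrt j.factorial * Real.sqrt (k - j).factorial =
      Real.sqrt k.factorial := by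
    rw [← Real.sqrt_mul (by positivity), ← Real.sqrt_mul (by positivity)]
    exact_mod_cast congrArg (fun n : ℕ => Real.sqrt (n : ℝ)) h
  have h2 := Real.mul_self_sqrt (Nat.cast_nonneg (α := ℝ) (k.choose j))
  have h3 : Real.sqrt (k.choose j) ≠ 0 := by
    have := Nat.choose_pos hjk
    positivity
  rw [zoomCoeff, hermiteFn_eq, hermiteFn_eq, ← h1]
  have h4 : Real.sqrt (j.factorial : ℝ) ≠ 0 := by positivity
  have h5 : Real.sqrt ((k - j).factorial : ℝ) ≠ 0 := by positivity
  field_simp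
  rw [pow_two, h2]
  ring

theorem sum_pow_mul_zoomCoeff_sq (a b ρ : ℝ) {k d : ℕ} (hkd : k ≤ d) :
    ∑ j ∈ Finset.range (d + 1), ρ ^ j * zoomCoeff a b k j ^ 2 = (a ^ 2 + ρ * b ^ 2) ^ k := by
  rw [sum_range_extend hkd fun j hj => by simp [zoomCoeff_eq_zero hj],
    add_comm (a ^ 2), add_pow]
  refine Finset.sum_congr rfl fun j _ => ?_
  rw [zoomCoeff, mul_pow, mul_pow, Real.sq_sqrt (by positivity)]
  ring

theorem exists_monomial_hermite_expansion (s : ℕ) :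
    ∃ c : ℕ → ℝ, (∀ j, s < j → c j = 0) ∧
      ∀ t : ℝ, t ^ s = ∑ j ∈ Finset.range (s + 1), c j * hermiteFn j t := by
  let S : Polynomial.Sequence ℝ :=
    { elems' := hermiteReal
      degree_eq' := fun i => by
        rw [hermiteReal, (Polynomial.hermite_monic i).degree_map, Polynomial.degree_hermite] }
  have hS : ∀ i, S i = hermiteReal i := fun _ => rfl
  have hmem : (Polynomial.X : Polynomial ℝ) ^ s ∈ Submodule.span ℝ (S '' Set.Iic s) := by
    rw [S.span_degreeLE fun i _ => IsUnit.mk0 _ (by simp), Polynomial.mem_degreeLE]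
    simp
  obtain ⟨l, hl, hsum⟩ := (Finsupp.mem_span_image_iff_linearCombination ℝ).1 hmem
  have hl0 : ∀ j, s < j → l j = 0 := fun j hj => by
    by_contra hne
    have := hl (Finsupp.mem_support_iff.2 hne)
    simp at this
    omega
  refine ⟨fun j => l j * Real.sqrt j.factorial, fun j hj => by simp [hl0 j hj], fun t => ?_⟩
  have h := congrArg (Polynomial.eval t) hsum
  rw [Finsupp.linearCombination_apply, Finsupp.sum_of_support_subset l
    (s := Finset.range (s + 1)) (fun j hj => ?_) _ (by simp)] at h
  · rw [Polynomial.eval_finsetSum] at h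
    simp only [Polynomial.eval_smul, hS, smul_eq_mul, Polynomial.eval_pow, Polynomial.eval_X] at h
    rw [← h]
    refine Finset.sum_congr rfl fun j _ => ?_
    have h4 : Real.sqrt (j.factorial : ℝ) ≠ 0 := by positivity
    rw [hermiteFn_eq]
    field_simp
  · by_contra hne
    exact Finsupp.mem_support_iff.1 hj (hl0 j (by simpa [Nat.lt_succ_iff] using hne))

/-- The coefficient of `h_j` in the Hermite expansion of the monomial `t ^ s`. -/
noncomputable def monoCoeff (s j : ℕ) : ℝ := (exists_monomial_hermite_expansion s).choose j

theorem monoCoeff_eq_zero {s j : ℕ} (h : s < j) : monoCoeff s j = 0 :=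
  (exists_monomial_hermite_expansion s).choose_spec.1 j h

theorem pow_eq_sum_monoCoeff {s d : ℕ} (hsd : s ≤ d) (t : ℝ) :
    t ^ s = ∑ j ∈ Finset.range (d + 1), monoCoeff s j * hermiteFn j t := by
  rw [sum_range_extend hsd fun j hj => by simp [monoCoeff_eq_zero hj]]
  exact (exists_monomial_hermite_expansion s).choose_spec.2 t

instance isProbabilityMeasure_gaussianN (n : ℕ) : IsProbabilityMeasure (gaussianN n) := by
  unfold gaussianN
  infer_instance

theorem integral_hermiteMv_mul {n : ℕ} (α β : Fin n → ℕ) :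
    ∫ x, hermiteMv α x * hermiteMv β x ∂(gaussianN n) = if α = β then 1 else 0 := by
  simp only [hermiteMv, ← Finset.prod_mul_distrib, gaussianN]
  rw [integral_fintype_prod_eq_prod (fun i t => hermiteFn (α i) t * hermiteFn (β i) t)]
  simp_rw [integral_hermiteFn_mul]
  split_ifs with h
  · simp [h]
  · obtain ⟨i, hi⟩ := Function.ne_iff.1 h
    exact Finset.prod_eq_zero (Finset.mem_univ i) (if_neg hi)

theorem integrable_hermiteMv_mul {n : ℕ} (α β : Fin n → ℕ) :
    Integrable (fun x => hermiteMv α x * hermiteMv β x) (gaussianN n) := by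
  simp only [hermiteMv, ← Finset.prod_mul_distrib, gaussianN]
  exact Integrable.fintype_prod (f := fun i t => hermiteFn (α i) t * hermiteFn (β i) t)
    fun i => integrable_hermiteFn_mul _ _

theorem continuous_hermiteMv {n : ℕ} (α : Fin n → ℕ) : Continuous (hermiteMv α) := by
  unfold hermiteMv
  exact continuous_finsetProd _ fun i _ => (continuous_hermiteFn _).comp (continuous_apply i)

theorem integral_sum_hermiteMv_mul {n : ℕ} {ι κ : Type*} (S : Finset ι) (T : Finset κ)
    (c : ι → ℝ) (e : κ → ℝ) (p : ι → Fin n → ℕ) (q : κ → Fin n → ℕ) :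
    ∫ x, (∑ i ∈ S, c i * hermiteMv (p i) x) * (∑ j ∈ T, e j * hermiteMv (q j) x) ∂(gaussianN n) =
      ∑ i ∈ S, ∑ j ∈ T, c i * e j * if p i = q j then 1 else 0 := by
  have h : ∀ x, (∑ i ∈ S, c i * hermiteMv (p i) x) * (∑ j ∈ T, e j * hermiteMv (q j) x) =
      ∑ i ∈ S, ∑ j ∈ T, c i * e j * (hermiteMv (p i) x * hermiteMv (q j) x) := fun x => by
    rw [Finset.sum_mul_sum]
    exact Finset.sum_congr rfl fun i _ => Finset.sum_congr rfl fun j _ => by ring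
  simp_rw [h]
  rw [integral_finsetSum _ fun i _ => integrable_finsetSum _ fun j _ =>
    (integrable_hermiteMv_mul _ _).const_mul _]
  refine Finset.sum_congr rfl fun i _ => ?_
  rw [integral_finsetSum _ fun j _ => (integrable_hermiteMv_mul _ _).const_mul _]
  refine Finset.sum_congr rfl fun j _ => ?_
  rw [integral_const_mul, integral_hermiteMv_mul]

theorem integrable_sum_hermiteMv_sq {n : ℕ} {ι : Type*} (S : Finset ι)
    (c : ι → ℝ) (p : ι → Fin n → ℕ) :
    Integrable (fun x => (∑ i ∈ S, c i * hermiteMv (p i) x) ^ 2) (gaussianN n) := by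
  have h : ∀ x, (∑ i ∈ S, c i * hermiteMv (p i) x) ^ 2 =
      ∑ i ∈ S, ∑ j ∈ S, c i * c j * (hermiteMv (p i) x * hermiteMv (p j) x) := fun x => by
    rw [pow_two, Finset.sum_mul_sum]
    exact Finset.sum_congr rfl fun i _ => Finset.sum_congr rfl fun j _ => by ring
  simp_rw [h]
  exact integrable_finsetSum _ fun i _ => integrable_finsetSum _ fun j _ =>
    (integrable_hermiteMv_mul _ _).const_mul _

theorem hermiteCoeffF_sum {n : ℕ} (S : Finset (Fin n → ℕ)) (c : (Fin n → ℕ) → ℝ)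
    (β : Fin n → ℕ) :
    hermiteCoeffF (fun y => ∑ α ∈ S, c α * hermiteMv α y) β = if β ∈ S then c β else 0 := by
  have h := integral_sum_hermiteMv_mul S {β} c (fun _ => 1) id id
  simpa [hermiteCoeffF] using h

/-- Multi-indices all of whose entries are at most `d`. -/
def multiBox (n d : ℕ) : Finset (Fin n → ℕ) :=
  Fintype.piFinset fun _ => Finset.range (d + 1)

theorem mem_multiBox {n d : ℕ} {α : Fin n → ℕ} : α ∈ multiBox n d ↔ ∀ i, α i ≤ d := by
  simp [multiBox]

theorem prod_sum_range_eq_sum_multiBox {n d : ℕ} (f : Fin n → ℕ → ℝ) :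
    ∏ i, ∑ j ∈ Finset.range (d + 1), f i j = ∑ α ∈ multiBox n d, ∏ i, f i (α i) :=
  Finset.prod_univ_sum _ _

theorem eval_eq_sum_multiBox {n d : ℕ} {g : MvPolynomial (Fin n) ℝ} (hg : g.totalDegree ≤ d)
    (x : Fin n → ℝ) :
    eval x g = ∑ s ∈ multiBox n d, coeff (Finsupp.equivFunOnFinite.symm s) g * ∏ i, x i ^ s i := by
  rw [eval_eq']
  refine Finset.sum_of_injOn (fun s => ⇑s) (DFunLike.coe_injective.injOn) ?_ ?_ ?_
  · intro s hs
    rw [Finset.mem_coe, mem_multiBox]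
    exact fun i => (s.le_degree i).trans ((le_totalDegree hs).trans hg)
  · intro s _ hs
    have : coeff (Finsupp.equivFunOnFinite.symm s) g = 0 := by
      by_contra hne
      exact hs ⟨Finsupp.equivFunOnFinite.symm s, by simpa [mem_support_iff] using hne, by simp⟩
    rw [this, zero_mul]
  · intro s _
    congr 2
    ext i
    simp

/-- The coefficient of `h_α` in the Hermite expansion of a polynomial of degree at most `d`. -/
noncomputable def expansionCoeff {n : ℕ} (d : ℕ) (g : MvPolynomial (Fin n) ℝ)
    (α : Fin n → ℕ) : ℝ :=
  ∑ s ∈ multiBox n d, coeff (Finsupp.equivFunOnFinite.symm s) g * ∏ i, monoCoeff (s i) (α i)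

theorem eval_eq_sum_expansionCoeff {n d : ℕ} {g : MvPolynomial (Fin n) ℝ}
    (hg : g.totalDegree ≤ d) (x : Fin n → ℝ) :
    eval x g = ∑ α ∈ multiBox n d, expansionCoeff d g α * hermiteMv α x := by
  simp only [eval_eq_sum_multiBox hg, expansionCoeff, Finset.sum_mul]
  rw [Finset.sum_comm]
  refine Finset.sum_congr rfl fun s hs => ?_
  rw [Finset.prod_congr rfl fun i _ => pow_eq_sum_monoCoeff (mem_multiBox.1 hs i) (x i),
    prod_sum_range_eq_sum_multiBox, Finset.mul_sum]
  refine Finset.sum_congr rfl fun α _ => ?_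
  rw [Finset.prod_mul_distrib, hermiteMv, mul_assoc]

theorem expansionCoeff_eq_zero {n d : ℕ} {g : MvPolynomial (Fin n) ℝ}
    (hg : g.totalDegree ≤ d) {α : Fin n → ℕ} (hα : d < ∑ i, α i) : expansionCoeff d g α = 0 := by
  refine Finset.sum_eq_zero fun s _ => ?_
  by_cases h : ∃ i, s i < α i
  · obtain ⟨i, hi⟩ := h
    rw [Finset.prod_eq_zero (Finset.mem_univ i) (monoCoeff_eq_zero hi), mul_zero]
  · push Not at h
    rw [coeff_eq_zero_of_totalDegree_lt, zero_mul]
    refine hg.trans_lt (hα.trans_le ((Finset.sum_le_sum fun i _ => h i).trans ?_))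
    rw [← Finsupp.degree_apply, Finsupp.degree_eq_sum]
    simp

theorem norm2sq_eq {n d : ℕ} {g : MvPolynomial (Fin n) ℝ} (hg : g.totalDegree ≤ d) :
    norm2sq g = ∑ α ∈ multiBox n d, expansionCoeff d g α ^ 2 := by
  simp only [norm2sq, eval_eq_sum_expansionCoeff hg, pow_two]
  refine (integral_sum_hermiteMv_mul _ _ _ _ id id).trans ?_
  refine Finset.sum_congr rfl fun α hα => ?_
  simp [hα]

/-- The coefficient of `h_β(y)` in `∑ α, c α * h_α (a * x + b * y)`, as a function of `x`. -/
noncomputable def zoomExpansion {n : ℕ} (d : ℕ) (a b : ℝ) (c : (Fin n → ℕ) → ℝ)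
    (β : Fin n → ℕ) (x : Fin n → ℝ) : ℝ :=
  ∑ α ∈ multiBox n d, c α * (∏ i, zoomCoeff a b (α i) (β i)) * hermiteMv (fun i => α i - β i) x

theorem sum_hermiteMv_add {n d : ℕ} {a b : ℝ} (hab : a ^ 2 + b ^ 2 = 1)
    (c : (Fin n → ℕ) → ℝ) (x y : Fin n → ℝ) :
    ∑ α ∈ multiBox n d, c α * hermiteMv α (fun i => a * x i + b * y i) =
      ∑ β ∈ multiBox n d, zoomExpansion d a b c β x * hermiteMv β y := by
  simp only [zoomExpansion, Finset.sum_mul]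
  rw [Finset.sum_comm]
  refine Finset.sum_congr rfl fun α hα => ?_
  rw [hermiteMv, Finset.prod_congr rfl fun i _ =>
    hermiteFn_add hab (mem_multiBox.1 hα i) (x i) (y i), prod_sum_range_eq_sum_multiBox,
    Finset.mul_sum]
  refine Finset.sum_congr rfl fun β _ => ?_
  simp only [hermiteMv, Finset.prod_mul_distrib]
  ring

theorem integral_zoomExpansion_sq {n d : ℕ} (a b : ℝ) (c : (Fin n → ℕ) → ℝ) (β : Fin n → ℕ) :
    ∫ x, zoomExpansion d a b c β x ^ 2 ∂(gaussianN n) =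
      ∑ α ∈ multiBox n d, c α ^ 2 * ∏ i, zoomCoeff a b (α i) (β i) ^ 2 := by
  simp only [zoomExpansion, pow_two]
  rw [integral_sum_hermiteMv_mul]
  refine Finset.sum_congr rfl fun α hα => ?_
  rw [Finset.sum_eq_single_of_mem α hα]
  · rw [if_pos rfl, Finset.prod_mul_distrib]
    ring
  · intro α' _ hne
    by_cases h : (∀ i, β i ≤ α i) ∧ ∀ i, β i ≤ α' i
    · rw [if_neg, mul_zero]
      refine fun heq => hne (funext fun i => ?_)
      have := congrFun heq i
      have h1 := h.1 i
      have h2 := h.2 i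
      omega
    · rw [not_and_or] at h
      push Not at h
      have hz : ∀ (γ : Fin n → ℕ) (i : Fin n), γ i < β i →
          ∏ i, zoomCoeff a b (γ i) (β i) = 0 := fun γ i hi =>
        Finset.prod_eq_zero (Finset.mem_univ i) (zoomCoeff_eq_zero hi)
      rcases h with ⟨i, hi⟩ | ⟨i, hi⟩ <;> simp [hz _ i hi]

theorem sum_pow_mul_integral_zoomExpansion_sq {n d : ℕ} (a b ρ : ℝ) (c : (Fin n → ℕ) → ℝ) :
    ∑ β ∈ multiBox n d, ρ ^ (∑ i, β i) * ∫ x, zoomExpansion d a b c β x ^ 2 ∂(gaussianN n) =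
      ∑ α ∈ multiBox n d, c α ^ 2 * (a ^ 2 + ρ * b ^ 2) ^ (∑ i, α i) := by
  simp only [integral_zoomExpansion_sq, Finset.mul_sum]
  rw [Finset.sum_comm]
  refine Finset.sum_congr rfl fun α hα => ?_
  rw [← Finset.prod_pow_eq_pow_sum, Finset.prod_congr rfl fun i _ =>
    (sum_pow_mul_zoomCoeff_sq a b ρ (mem_multiBox.1 hα i)).symm, prod_sum_range_eq_sum_multiBox,
    Finset.mul_sum]
  refine Finset.sum_congr rfl fun β _ => ?_
  rw [← Finset.prod_pow_eq_pow_sum, Finset.prod_mul_distrib]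
  ring

theorem hermiteCoeff_zoom {n d : ℕ} {g : MvPolynomial (Fin n) ℝ} (hg : g.totalDegree ≤ d)
    {lam : ℝ} (h0 : 0 ≤ lam) (h1 : lam ≤ 1) (x : Fin n → ℝ) (β : Fin n → ℕ) :
    hermiteCoeff (zoom g lam x) β = if β ∈ multiBox n d then
      zoomExpansion d (Real.sqrt (1 - lam)) (Real.sqrt lam) (expansionCoeff d g) β x else 0 := by
  rw [← hermiteCoeffF_sum (multiBox n d) (fun β => zoomExpansion d _ _ _ β x), hermiteCoeff]
  congr 1 with y
  rw [← sum_hermiteMv_add (by rw [Real.sq_sqrt (by linarith), Real.sq_sqrt h0]; ring),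
    ← eval_eq_sum_expansionCoeff hg, zoom, ← coe_aeval_eq_eval, AlgHom.coe_toRingHom,
    ← AlgHom.comp_apply, comp_aeval, aeval_def, eval₂_eq_eval_map]
  simp

/-- Chernoff-type domination of the high-degree weight of a zoom. -/
theorem hyperVarGE_zoom_le {n d : ℕ} {g : MvPolynomial (Fin n) ℝ} (hg : g.totalDegree ≤ d)
    {lam : ℝ} (h0 : 0 ≤ lam) (h1 : lam ≤ 1) {s : ℝ} (hs : 1 ≤ s) (R : ℝ) (m : ℕ)
    (x : Fin n → ℝ) :
    hyperVarGE R m (zoom g lam x) ≤ s⁻¹ ^ m * ∑ β ∈ multiBox n d, (s * R ^ 2) ^ (∑ i, β i) *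
      zoomExpansion d (Real.sqrt (1 - lam)) (Real.sqrt lam) (expansionCoeff d g) β x ^ 2 := by
  rw [hyperVarGE, tsum_eq_sum (s := multiBox n d), Finset.mul_sum]
  · refine Finset.sum_le_sum fun β hβ => ?_
    rw [hermiteCoeff_zoom hg h0 h1, if_pos hβ]
    have hs0 : 0 < s := by linarith
    split_ifs with hm
    · rw [mul_pow, ← pow_mul, ← mul_assoc, ← mul_assoc]
      refine mul_le_mul_of_nonneg_right ?_ (sq_nonneg _)
      refine le_mul_of_one_le_left (by rw [pow_mul]; positivity) ?_
      rw [inv_pow, ← div_eq_inv_mul, one_le_div (by positivity)]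
      exact pow_le_pow_right₀ hs hm
    · positivity
  · intro β hβ
    rw [hermiteCoeff_zoom hg h0 h1, if_neg hβ]
    simp

theorem hyperVarGE_nonneg {n : ℕ} (R : ℝ) (m : ℕ) (g : MvPolynomial (Fin n) ℝ) :
    0 ≤ hyperVarGE R m g := by
  refine tsum_nonneg fun α => ?_
  split_ifs
  · rw [pow_mul]; positivity
  · rfl

theorem integral_hyperVar_bound {n d : ℕ} {g : MvPolynomial (Fin n) ℝ} (hg : g.totalDegree ≤ d)
    {a b ρ : ℝ} (hab : a ^ 2 + b ^ 2 = 1) (hρ : 1 ≤ ρ) :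
    ∑ β ∈ multiBox n d, ρ ^ (∑ i, β i) *
        ∫ x, zoomExpansion d a b (expansionCoeff d g) β x ^ 2 ∂(gaussianN n) ≤
      (1 + ρ * b ^ 2) ^ d * norm2sq g := by
  rw [sum_pow_mul_integral_zoomExpansion_sq, norm2sq_eq hg, Finset.mul_sum]
  refine Finset.sum_le_sum fun α _ => ?_
  rcases lt_or_ge d (∑ i, α i) with hα | hα
  · simp [expansionCoeff_eq_zero hg hα]
  · rw [mul_comm]
    refine mul_le_mul_of_nonneg_right ?_ (sq_nonneg _)
    have hb := mul_nonneg (zero_le_one.trans hρ) (sq_nonneg b)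
    calc (a ^ 2 + ρ * b ^ 2) ^ (∑ i, α i) ≤ (1 + ρ * b ^ 2) ^ (∑ i, α i) := by
          refine pow_le_pow_left₀ (add_nonneg (sq_nonneg a) hb) ?_ _
          nlinarith [sq_nonneg b]
      _ ≤ _ := pow_le_pow_right₀ (by linarith) hα

theorem integrable_zoomExpansion_sq {n : ℕ} (d : ℕ) (a b : ℝ) (c : (Fin n → ℕ) → ℝ)
    (β : Fin n → ℕ) : Integrable (fun x => zoomExpansion d a b c β x ^ 2) (gaussianN n) :=
  integrable_sum_hermiteMv_sq _ _ _

theorem NiceFamily.exists_expansionCoeff_eq_eval {n I d : ℕ}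
    {g : (Fin I → ℝ) → MvPolynomial (Fin n) ℝ} (hg : NiceFamily n I d g) (α : Fin n → ℕ) :
    ∃ Q : MvPolynomial (Fin I) ℝ, ∀ υ, expansionCoeff d (g υ) α = eval υ Q := by
  choose P _ hP using hg.2
  refine ⟨∑ s ∈ multiBox n d, P (Finsupp.equivFunOnFinite.symm s) *
    C (∏ i, monoCoeff (s i) (α i)), fun υ => ?_⟩
  simp [expansionCoeff, hP]

theorem integrable_eval_sq {I : ℕ} (Q : MvPolynomial (Fin I) ℝ) :
    Integrable (fun υ => eval υ Q ^ 2) (gaussianN I) := by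
  simp_rw [eval_eq_sum_expansionCoeff (le_refl Q.totalDegree)]
  exact integrable_sum_hermiteMv_sq _ _ id

theorem NiceFamily.integrable_norm2sq {n I d : ℕ}
    {g : (Fin I → ℝ) → MvPolynomial (Fin n) ℝ} (hg : NiceFamily n I d g) :
    Integrable (fun υ => norm2sq (g υ)) (gaussianN I) := by
  simp_rw [fun υ => norm2sq_eq (hg.1 υ)]
  refine integrable_finsetSum _ fun α _ => ?_
  obtain ⟨Q, hQ⟩ := hg.exists_expansionCoeff_eq_eval α
  simpa [hQ] using integrable_eval_sq Q

theorem NiceFamily.continuous_zoomExpansion {n I d : ℕ}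
    {g : (Fin I → ℝ) → MvPolynomial (Fin n) ℝ} (hg : NiceFamily n I d g) (a b : ℝ)
    (β : Fin n → ℕ) : Continuous fun z : (Fin n → ℝ) × (Fin I → ℝ) =>
      zoomExpansion d a b (expansionCoeff d (g z.2)) β z.1 := by
  unfold zoomExpansion
  refine continuous_finsetSum _ fun α _ => ?_
  obtain ⟨Q, hQ⟩ := hg.exists_expansionCoeff_eq_eval α
  simp_rw [hQ]
  exact (((MvPolynomial.continuous_eval Q).comp continuous_snd).mul continuous_const).mul
    ((continuous_hermiteMv _).comp continuous_fst)

theorem ofReal_integral_le_lintegral {Ω : Type*} [MeasurableSpace Ω] {μ : Measure Ω}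
    {f : Ω → ℝ} (hf : ∀ ω, 0 ≤ f ω) :
    ENNReal.ofReal (∫ ω, f ω ∂μ) ≤ ∫⁻ ω, ENNReal.ofReal (f ω) ∂μ := by
  by_cases h : Integrable f μ
  · exact (ofReal_integral_eq_lintegral_ofReal h (Filter.Eventually.of_forall hf)).le
  · simp [integral_undef h]

theorem measure_lt_le_of_lintegral_le {Ω : Type*} [MeasurableSpace Ω] {μ : Measure Ω}
    {G : Ω → ENNReal} (hG : Measurable G) {B β : ℝ} (hB : 0 ≤ B) (hβ : 0 < β)
    (h : ∫⁻ ω, G ω ∂μ ≤ ENNReal.ofReal B) :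
    μ {ω | ENNReal.ofReal (B / β) < G ω} ≤ ENNReal.ofReal β := by
  rcases hB.eq_or_lt with rfl | hB
  · have h0 : ∫⁻ ω, G ω ∂μ = 0 := by simpa using h
    rw [lintegral_eq_zero_iff hG] at h0
    refine le_of_eq_of_le ?_ zero_le
    refine measure_mono_null (fun ω hω => ?_) h0
    simpa [pos_iff_ne_zero] using hω
  · have hpos : 0 < B / β := div_pos hB hβ
    calc μ {ω | ENNReal.ofReal (B / β) < G ω}
        ≤ μ {ω | ENNReal.ofReal (B / β) ≤ G ω} := measure_mono fun ω hω => le_of_lt (α := ENNReal) hω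
      _ ≤ (∫⁻ ω, G ω ∂μ) / ENNReal.ofReal (B / β) :=
          meas_ge_le_lintegral_div hG.aemeasurable (by simpa using hpos) ENNReal.ofReal_ne_top
      _ ≤ ENNReal.ofReal B / ENNReal.ofReal (B / β) := ENNReal.div_le_div_right h _
      _ = ENNReal.ofReal β := by
          rw [← ENNReal.ofReal_div_of_pos hpos, div_div_cancel₀ hB.ne']

/-- Markov's inequality for the high-degree weight of a random zoom, with Chernoff parameter `s`. -/
theorem NiceFamily.measure_hyperVarGE_gt_le {n I d : ℕ}
    {g : (Fin I → ℝ) → MvPolynomial (Fin n) ℝ} (hg : NiceFamily n I d g) {lam : ℝ}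
    (h0 : 0 ≤ lam) (h1 : lam ≤ 1) {s R β : ℝ} (hs : 1 ≤ s) (hR : 1 ≤ R) (hβ : 0 < β) (m : ℕ) :
    gaussianN n {x | s⁻¹ ^ m * (1 + s * R ^ 2 * lam) ^ d *
        (∫ υ, norm2sq (g υ) ∂(gaussianN I)) / β <
        ∫ υ, hyperVarGE R m (zoom (g υ) lam x) ∂(gaussianN I)} ≤ ENNReal.ofReal β := by
  have hs0 : 0 < s := by linarith
  have hρ : 1 ≤ s * R ^ 2 := by nlinarith
  set a := Real.sqrt (1 - lam)
  set b := Real.sqrt lam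
  have hb : b ^ 2 = lam := Real.sq_sqrt h0
  have ha : a ^ 2 = 1 - lam := Real.sq_sqrt (by linarith)
  set Φ : (Fin n → ℝ) → (Fin I → ℝ) → ℝ := fun x υ => s⁻¹ ^ m *
    ∑ β ∈ multiBox n d, (s * R ^ 2) ^ (∑ i, β i) *
      zoomExpansion d a b (expansionCoeff d (g υ)) β x ^ 2 with hΦ
  have hΦ0 : ∀ x υ, 0 ≤ Φ x υ := fun x υ => by positivity
  have hmeas : Measurable fun z : (Fin n → ℝ) × (Fin I → ℝ) => ENNReal.ofReal (Φ z.1 z.2) := by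
    refine Measurable.ennreal_ofReal (Continuous.measurable ?_)
    exact continuous_const.mul (continuous_finsetSum _ fun β _ =>
      continuous_const.mul ((hg.continuous_zoomExpansion a b β).pow 2))
  have hA : 0 ≤ ∫ υ, norm2sq (g υ) ∂(gaussianN I) :=
    integral_nonneg fun υ => integral_nonneg fun x => sq_nonneg _
  have hle : ∫⁻ x, ∫⁻ υ, ENNReal.ofReal (Φ x υ) ∂(gaussianN I) ∂(gaussianN n) ≤
      ENNReal.ofReal (s⁻¹ ^ m * (1 + s * R ^ 2 * lam) ^ d *
        ∫ υ, norm2sq (g υ) ∂(gaussianN I)) := by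
    rw [lintegral_lintegral_swap hmeas.aemeasurable, ← integral_const_mul,
      ofReal_integral_eq_lintegral_ofReal (hg.integrable_norm2sq.const_mul _)
        (Filter.Eventually.of_forall fun υ =>
          mul_nonneg (by positivity) (integral_nonneg fun x => sq_nonneg _))]
    refine lintegral_mono fun υ => ?_
    have hint : ∀ β ∈ multiBox n d, Integrable (fun x => (s * R ^ 2) ^ (∑ i, β i) *
        zoomExpansion d a b (expansionCoeff d (g υ)) β x ^ 2) (gaussianN n) := fun β _ =>
      (integrable_zoomExpansion_sq _ _ _ _ _).const_mul _
    rw [← ofReal_integral_eq_lintegral_ofReal ((integrable_finsetSum _ hint).const_mul _)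
      (Filter.Eventually.of_forall fun x => hΦ0 x υ)]
    refine ENNReal.ofReal_le_ofReal ?_
    rw [integral_const_mul, integral_finsetSum _ hint, mul_assoc]
    simp_rw [integral_const_mul]
    refine mul_le_mul_of_nonneg_left ?_ (by positivity)
    rw [← hb]
    exact integral_hyperVar_bound (hg.1 υ) (by rw [ha, hb]; ring) hρ
  refine (measure_mono fun x hx => ?_).trans
    (measure_lt_le_of_lintegral_le hmeas.lintegral_prod_right' (by positivity) hβ hle)
  rw [Set.mem_ofPred_eq] at hx ⊢
  refine ((ENNReal.ofReal_lt_ofReal_iff_of_nonneg (by positivity)).2 hx).trans_le ?_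
  refine (ofReal_integral_le_lintegral fun υ => hyperVarGE_nonneg _ _ _).trans ?_
  exact lintegral_mono fun υ => ENNReal.ofReal_le_ofReal
    (hyperVarGE_zoom_le (hg.1 υ) h0 h1 hs R m x)

/-- Attrition of high-degree Hermite weight: there are universal constants `c > 0` and
`C ≥ 1` such that for a nice distribution `(g_υ)` of degree-`d` polynomials, parameters
`0 < β' < 1`, `R' ≥ 1`, `m ≥ 1`, `0 < ε ≤ 1`, and `0 ≤ λ ≤ c⁴·ε·β'⁵/(R'²·m³·d)`, for
`x ∼ N(0,1)^n`, except with probability at most `β'`,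
`(1/ε)·E_υ[HyperVar_{R'}[((g_υ)_{λ|x})^{≥m}]] ≤ (C·c·β'/m)^{4m}·E_υ[‖g_υ‖₂²]`.
Here `HyperVar_{R'}[g^{≥m}]` is encoded as `hyperVarGE R' m g`. -/
theorem attrition_of_high_degree_weight :
    ∃ c C : ℝ, 0 < c ∧ 1 ≤ C ∧
      ∀ (n I d m : ℕ), 1 ≤ m →
      ∀ g : (Fin I → ℝ) → MvPolynomial (Fin n) ℝ, NiceFamily n I d g →
      ∀ β' R' ε lam : ℝ, 0 < β' → β' < 1 → 1 ≤ R' → 0 < ε → ε ≤ 1 →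
      0 ≤ lam → lam ≤ c ^ 4 * ε * β' ^ 5 / (R' ^ 2 * m ^ 3 * d) →
      gaussianN n {x | ¬ ((1 / ε) * (∫ υ, hyperVarGE R' m (zoom (g υ) lam x) ∂(gaussianN I)) ≤
          (C * c * β' / m) ^ (4 * m) * ∫ υ, norm2sq (g υ) ∂(gaussianN I))} ≤
        ENNReal.ofReal β' := by
  refine ⟨1, 2, one_pos, one_le_two, fun n I d m hm g hg β R ε lam hβ hβ1 hR hε hε1 hl hlam => ?_⟩
  have hm1 : (1 : ℝ) ≤ m := by exact_mod_cast hm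
  have hm0 : (0 : ℝ) < m := by linarith
  have hR0 : 0 < R := by linarith
  have hεβ : ε * β ^ 5 ≤ 1 := mul_le_one₀ hε1 (by positivity) (pow_le_one₀ hβ.le hβ1.le)
  have hεβ0 : 0 < ε * β ^ 5 := by positivity
  rw [one_pow, one_mul] at hlam
  have hD : lam * (R ^ 2 * m ^ 3 * d) ≤ ε * β ^ 5 ∧ lam ≤ 1 := by
    rcases Nat.eq_zero_or_pos d with rfl | hd
    · simp only [Nat.cast_zero, mul_zero, div_zero] at hlam ⊢
      exact ⟨hεβ0.le, by linarith⟩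
    · have hd1 : (1 : ℝ) ≤ d := by exact_mod_cast hd
      have h1 : (1 : ℝ) ≤ R ^ 2 * m ^ 3 * d :=
        one_le_mul_of_one_le_of_one_le
          (one_le_mul_of_one_le_of_one_le (one_le_pow₀ hR) (one_le_pow₀ hm1)) hd1
      have h2 := (le_div_iff₀ (by linarith)).1 hlam
      exact ⟨h2, (le_mul_of_one_le_right hl h1).trans (h2.trans hεβ)⟩
  obtain ⟨hD, hl1⟩ := hD
  set s : ℝ := m ^ 4 / (ε * β ^ 5) with hs
  have hs1 : 1 ≤ s := (one_le_div hεβ0).2 (hεβ.trans (one_le_pow₀ hm1))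
  have hs0 : 0 < s := by linarith
  have hexp : (1 + s * R ^ 2 * lam) ^ d ≤ 16 ^ m := by
    have hsd : s * R ^ 2 * lam * d ≤ m := by
      have : s * R ^ 2 * lam * d = m * (lam * (R ^ 2 * m ^ 3 * d)) / (ε * β ^ 5) := by
        rw [hs]
        ring
      rw [this, div_le_iff₀ hεβ0]
      exact mul_le_mul_of_nonneg_left hD hm0.le
    calc (1 + s * R ^ 2 * lam) ^ d ≤ Real.exp (s * R ^ 2 * lam) ^ d := by
          refine pow_le_pow_left₀ (by positivity) ?_ _
          rw [add_comm]
          exact Real.add_one_le_exp _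
      _ = Real.exp (s * R ^ 2 * lam * d) := by rw [mul_comm _ (d : ℝ), Real.exp_nat_mul]
      _ ≤ Real.exp m := Real.exp_le_exp.2 hsd
      _ = Real.exp 1 ^ m := by rw [← Real.exp_nat_mul, mul_one]
      _ ≤ 16 ^ m := pow_le_pow_left₀ (Real.exp_pos _).le
          (by linarith [Real.exp_one_lt_d9]) _
  have hconst : s⁻¹ ^ m * (1 + s * R ^ 2 * lam) ^ d / β ≤ ε * (2 * 1 * β / m) ^ (4 * m) := by
    have hsm : s⁻¹ ^ m ≤ ε * β * (β / m) ^ (4 * m) := by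
      have : s⁻¹ ^ m = ε ^ m * β ^ m * (β / m) ^ (4 * m) := by
        rw [pow_mul, ← mul_pow, ← mul_pow, hs]
        congr 1
        field_simp
      rw [this]
      refine mul_le_mul_of_nonneg_right ?_ (by positivity)
      exact mul_le_mul (pow_le_of_le_one hε.le hε1 (by omega))
        (pow_le_of_le_one hβ.le hβ1.le (by omega)) (by positivity) hε.le
    rw [div_le_iff₀ hβ]
    calc s⁻¹ ^ m * (1 + s * R ^ 2 * lam) ^ d
        ≤ ε * β * (β / m) ^ (4 * m) * 16 ^ m := mul_le_mul hsm hexp (by positivity) (by positivity)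
      _ = ε * (2 * 1 * β / m) ^ (4 * m) * β := by
          rw [mul_one, mul_div_assoc, mul_pow 2, pow_mul (2 : ℝ)]
          norm_num
          ring
  refine (measure_mono fun x hx => ?_).trans (hg.measure_hyperVarGE_gt_le hl hl1 hs1 hR hβ m)
  rw [Set.mem_ofPred_eq, not_le, one_div, ← div_eq_inv_mul, lt_div_iff₀ hε] at hx
  refine lt_of_le_of_lt ?_ hx
  rw [mul_div_right_comm, mul_comm _ ε, ← mul_assoc]
  exact mul_le_mul_of_nonneg_right hconst
    (integral_nonneg fun υ => integral_nonneg fun y => sq_nonneg _)
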